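/- For all natural numbers n, ℓ and c, K₃(n,ℓ,c) equals the number of color-preserving flip-equivalence classes of 2-colored planar binary trees with exactly n nodes, exactly c black nodes, and class cardinality 2^ℓ (equivalently, whose members have exactly ℓ internal positions with non-equivalent children subtrees); in particular K₃(n,ℓ,c) is a natural number. -/

import Mathlib

/-- 2-colored planar binary trees: each node carries a color, black = `true`. -/
inductive T2 : Type where
  | nil : T2
  | node : Bool → T2 → T2 → T2

/-- The number of nodes of a 2-colored planar binary tree. -/
def T2.nodes : T2 → ℕ
  | .nil => 0
  | .node _ a b => a.nodes + b.nodes + 1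

/-- The number of black (`true`) nodes of a 2-colored planar binary tree. -/
def T2.blacks : T2 → ℕ
  | .nil => 0
  | .node c a b => a.blacks + b.blacks + (if c then 1 else 0)

/-- Color-preserving flip equivalence: the least relation such that `nil ≈ nil` and,
whenever `a ≈ c` and `b ≈ d`, both `node col a b ≈ node col c d` and
`node col a b ≈ node col d c` for every color `col`. -/
inductive Flip2 : T2 → T2 → Prop where
  | nil : Flip2 .nil .nil
  | node {a b c d : T2} (col : Bool) :
      Flip2 a c → Flip2 b d → Flip2 (.node col a b) (.node col c d)
  | swap {a b c d : T2} (col : Bool) :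
      Flip2 a c → Flip2 b d → Flip2 (.node col a b) (.node col d c)

open Classical in
/-- The number of internal positions of a 2-colored tree whose two children subtrees are not
color-preserving flip-equivalent. -/
noncomputable def ell2 : T2 → ℕ
  | .nil => 0
  | .node _ a b => ell2 a + ell2 b + (if Flip2 a b then 0 else 1)

open Classical in
/-- The array `K3 n ℓ c`: base cases (taking precedence) `K3 0 0 0 = 1`; `K3 n ℓ c = 0`
whenever `ℓ ≥ n > 0` or `c > n`; `K3 n (n-1) c = C(n,c)` for `n ≥ 1` and `0 ≤ c ≤ n`;
`K3 n 0 c = 1` if `n = 2^r - 1` for some `r ≥ 1` and `0 ≤ c ≤ n`, and `K3 n 0 c = 0` for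
other `n ≥ 1`; otherwise, for `p, q, r ∈ {0,1}`,
`K3 (2n+p) (2ℓ+q) (2c+r) = p·(-1/2)^q·K3 n ℓ c + (1/2) · ∑_{δ=0, δ≤2c+r}^{1} ∑_{k=0}^{2n+p-1}
∑_{v=0}^{2ℓ+q-1} ∑_{m=0}^{2c+r-δ} K3 k v m · K3 (2n+p-1-k) (2ℓ+q-1-v) (2c+r-δ-m)`. -/
noncomputable def K3 : ℕ → ℕ → ℕ → ℚ
  | 0, l, c => if l = 0 ∧ c = 0 then 1 else 0
  | n + 1, l, c =>
    if n + 1 ≤ l ∨ n + 1 < c then 0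
    else if l = n then ((n + 1).choose c : ℚ)
    else if l = 0 then (if ∃ r : ℕ, 1 ≤ r ∧ n + 1 = 2 ^ r - 1 then 1 else 0)
    else
      (if (n + 1) % 2 = 1 then ((-1 : ℚ) / 2) ^ (l % 2) * K3 ((n + 1) / 2) (l / 2) (c / 2)
        else 0)
      + (1 / 2) * ∑ δ ∈ Finset.range 2, if δ ≤ c then
          (∑ k ∈ (Finset.range (n + 1)).attach, ∑ v ∈ Finset.range l,
            ∑ m ∈ Finset.range (c - δ + 1),
              K3 k.1 v m * K3 (n - k.1) (l - 1 - v) (c - δ - m)) else 0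
termination_by n l c => n
decreasing_by
  · omega
  · have := Finset.mem_range.mp k.2; omega
  · omega


namespace K3Proof

theorem flip_refl (t : T2) : Flip2 t t := by
  induction t with
  | nil => exact .nil
  | node c a b iha ihb => exact .node c iha ihb

theorem flip_symm {s t : T2} (h : Flip2 s t) : Flip2 t s := by
  induction h with
  | nil => exact .nil
  | node col _ _ h1 h2 => exact .node col h1 h2
  | swap col _ _ h1 h2 => exact .swap col h2 h1

theorem flip_trans {s t : T2} (h : Flip2 s t) : ∀ {u : T2}, Flip2 t u → Flip2 s u := by
  induction h with
  | nil => intro u hu; exact hu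
  | node col _ _ h1 h2 =>
    intro u hu
    cases hu with
    | node _ k1 k2 => exact .node col (h1 k1) (h2 k2)
    | swap _ k1 k2 => exact .swap col (h1 k1) (h2 k2)
  | swap col _ _ h1 h2 =>
    intro u hu
    cases hu with
    | node _ k1 k2 => exact .swap col (h1 k2) (h2 k1)
    | swap _ k1 k2 => exact .node col (h1 k2) (h2 k1)

theorem flip_nodes {s t : T2} (h : Flip2 s t) : s.nodes = t.nodes := by
  induction h with
  | nil => rfl
  | node col _ _ h1 h2 => simp only [T2.nodes]; omega
  | swap col _ _ h1 h2 => simp only [T2.nodes]; omega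

theorem flip_blacks {s t : T2} (h : Flip2 s t) : s.blacks = t.blacks := by
  induction h with
  | nil => rfl
  | node col _ _ h1 h2 => simp only [T2.blacks]; omega
  | swap col _ _ h1 h2 => simp only [T2.blacks]; omega

theorem flip_ell {s t : T2} (h : Flip2 s t) : ell2 s = ell2 t := by
  induction h with
  | nil => rfl
  | @node a b c d col k1 k2 h1 h2 =>
    have : Flip2 a b ↔ Flip2 c d :=
      ⟨fun h => flip_trans (flip_symm k1) (flip_trans h k2),
        fun h => flip_trans k1 (flip_trans h (flip_symm k2))⟩
    by_cases h : Flip2 c d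
    · simp [ell2, this.2 h, h, h1, h2]
    · simp [ell2, mt this.1 h, h, h1, h2]
  | @swap a b c d col k1 k2 h1 h2 =>
    have : Flip2 a b ↔ Flip2 d c :=
      ⟨fun h => flip_symm (flip_trans (flip_symm k1) (flip_trans h k2)),
        fun h => flip_trans k1 (flip_trans (flip_symm h) (flip_symm k2))⟩
    by_cases h : Flip2 d c
    · simp [ell2, this.2 h, h, h1, h2, add_comm]
    · simp [ell2, mt this.1 h, h, h1, h2, add_comm]

instance flipSetoid : Setoid T2 := ⟨Flip2, flip_refl, flip_symm, fun h1 h2 => flip_trans h1 h2⟩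

abbrev Q := Quotient flipSetoid

def qn : Q → ℕ := Quotient.lift T2.nodes (fun _ _ h => flip_nodes h)
def qb : Q → ℕ := Quotient.lift T2.blacks (fun _ _ h => flip_blacks h)
noncomputable def ql : Q → ℕ := Quotient.lift ell2 (fun _ _ h => flip_ell h)
def qnode (col : Bool) : Q → Q → Q :=
  Quotient.map₂ (T2.node col) (fun _ _ h1 _ _ h2 => Flip2.node col h1 h2)
def qnil : Q := Quotient.mk _ T2.nil

theorem q_cases (q : Q) : q = qnil ∨ ∃ col A B, q = qnode col A B := by
  induction q using Quotient.inductionOn with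
  | h t =>
    cases t with
    | nil => left; rfl
    | node c a b => right; exact ⟨c, Quotient.mk _ a, Quotient.mk _ b, rfl⟩

theorem qnode_eq (col col' : Bool) (A B A' B' : Q) :
    qnode col A B = qnode col' A' B' ↔
      col = col' ∧ ((A = A' ∧ B = B') ∨ (A = B' ∧ B = A')) := by
  induction A using Quotient.inductionOn with | h a =>
  induction B using Quotient.inductionOn with | h b =>
  induction A' using Quotient.inductionOn with | h a' =>
  induction B' using Quotient.inductionOn with | h b' =>
  have e : ∀ x y : T2, (Quotient.mk flipSetoid x = Quotient.mk flipSetoid y) ↔ Flip2 x y :=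
    fun x y => Quotient.eq
  change Quotient.mk flipSetoid (T2.node col a b) = Quotient.mk flipSetoid (T2.node col' a' b') ↔ _
  simp only [e]
  constructor
  · intro h
    cases h with
    | node _ h1 h2 => exact ⟨rfl, Or.inl ⟨h1, h2⟩⟩
    | swap _ h1 h2 => exact ⟨rfl, Or.inr ⟨h1, h2⟩⟩
  · rintro ⟨rfl, ⟨h1, h2⟩ | ⟨h1, h2⟩⟩
    · exact .node _ h1 h2
    · exact .swap _ h1 h2

theorem qn_node (col : Bool) (A B : Q) : qn (qnode col A B) = qn A + qn B + 1 := by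
  induction A using Quotient.inductionOn with | h a =>
  induction B using Quotient.inductionOn with | h b => rfl

theorem qb_node (col : Bool) (A B : Q) :
    qb (qnode col A B) = qb A + qb B + (if col then 1 else 0) := by
  induction A using Quotient.inductionOn with | h a =>
  induction B using Quotient.inductionOn with | h b => rfl

open Classical in
theorem ql_node (col : Bool) (A B : Q) :
    ql (qnode col A B) = ql A + ql B + (if A = B then 0 else 1) := by
  induction A using Quotient.inductionOn with | h a =>
  induction B using Quotient.inductionOn with | h b =>
  have e : (Quotient.mk flipSetoid a = Quotient.mk flipSetoid b) ↔ Flip2 a b := Quotient.eq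
  simp only [e]
  rfl

theorem finite_trees (n : ℕ) : {t : T2 | t.nodes ≤ n}.Finite := by
  induction n with
  | zero =>
    refine (Set.finite_singleton T2.nil).subset ?_
    intro t ht
    cases t with
    | nil => rfl
    | node c a b => simp [T2.nodes] at ht
  | succ n ih =>
    refine ((Set.finite_singleton T2.nil).union
      ((Set.finite_univ (α := Bool)).prod (ih.prod ih) |>.image
        (fun p : Bool × T2 × T2 => T2.node p.1 p.2.1 p.2.2))).subset ?_
    intro t ht
    cases t with
    | nil => left; rfl
    | node c a b =>
      right
      simp only [T2.nodes, Set.mem_ofPred_eq] at ht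
      refine ⟨(c, a, b), ?_, rfl⟩
      simp only [Set.mem_prod, Set.mem_univ, Set.mem_ofPred_eq, true_and]
      omega

theorem finite_q (n l c : ℕ) : {q : Q | qn q = n ∧ ql q = l ∧ qb q = c}.Finite := by
  refine ((finite_trees n).image (Quotient.mk flipSetoid)).subset ?_
  intro q hq
  induction q using Quotient.inductionOn with | h t =>
  exact ⟨t, le_of_eq hq.1, rfl⟩

noncomputable def S (n l c : ℕ) : Finset Q := (finite_q n l c).toFinset

theorem mem_S {n l c : ℕ} {q : Q} : q ∈ S n l c ↔ qn q = n ∧ ql q = l ∧ qb q = c := by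
  simp [S]

noncomputable def N (n l c : ℕ) : ℚ := ((S n l c).card : ℚ)

theorem finite_pairs (n l c : ℕ) :
    {p : Q × Q | qn p.1 + qn p.2 = n ∧ ql p.1 + ql p.2 = l ∧ qb p.1 + qb p.2 = c}.Finite := by
  have h : {q : Q | qn q ≤ n}.Finite := by
    refine ((finite_trees n).image (Quotient.mk flipSetoid)).subset ?_
    intro q hq
    induction q using Quotient.inductionOn with | h t =>
    exact ⟨t, hq, rfl⟩
  refine (h.prod h).subset ?_
  rintro ⟨A, B⟩ hp
  simp only [Set.mem_ofPred_eq, Set.mem_prod] at hp ⊢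
  omega

/-- ordered pairs with prescribed totals -/
noncomputable def P (n l c : ℕ) : Finset (Q × Q) := (finite_pairs n l c).toFinset

theorem mem_P {n l c : ℕ} {p : Q × Q} : p ∈ P n l c ↔
    qn p.1 + qn p.2 = n ∧ ql p.1 + ql p.2 = l ∧ qb p.1 + qb p.2 = c := by
  simp [P]

theorem card_P (n l c : ℕ) : ((P n l c).card : ℚ) =
    ∑ k ∈ Finset.range (n + 1), ∑ v ∈ Finset.range (l + 1), ∑ m ∈ Finset.range (c + 1),
      N k v m * N (n - k) (l - v) (c - m) := by
  classical
  have h := Finset.card_eq_sum_card_fiberwise (s := P n l c)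
    (f := fun p : Q × Q => (qn p.1, ql p.1, qb p.1))
    (t := Finset.range (n + 1) ×ˢ (Finset.range (l + 1) ×ˢ Finset.range (c + 1))) (by
      intro p hp
      have hp := mem_P.1 hp
      simp only [Finset.coe_product, Set.mem_prod, Finset.mem_coe, Finset.mem_range]
      omega)
  rw [h]
  push_cast
  rw [Finset.sum_product]
  refine Finset.sum_congr rfl fun k hk => ?_
  rw [Finset.sum_product]
  refine Finset.sum_congr rfl fun v hv => Finset.sum_congr rfl fun m hm => ?_
  rw [N, N, ← Nat.cast_mul, ← Finset.card_product]
  congr 2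
  ext ⟨A, B⟩
  simp only [Finset.mem_range] at hk hv hm
  simp only [Finset.mem_filter, mem_P, Finset.mem_product, mem_S, Prod.mk.injEq]
  omega

open Classical in
/-- number of diagonal pairs -/
theorem card_diag (n l c : ℕ) : (((P n l c).filter (fun p => p.1 = p.2)).card : ℚ) =
    if n % 2 = 0 ∧ l % 2 = 0 ∧ c % 2 = 0 then N (n / 2) (l / 2) (c / 2) else 0 := by
  split_ifs with h
  · rw [N]
    congr 1
    symm
    refine Finset.card_bij (fun q _ => (q, q)) ?_ ?_ ?_
    · intro q hq
      have := mem_S.1 hq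
      simp only [Finset.mem_filter, mem_P, and_true]
      omega
    · intro a _ b _ hab
      exact (Prod.mk.inj hab).1
    · rintro ⟨A, B⟩ hp
      simp only [Finset.mem_filter, mem_P] at hp
      obtain ⟨hp, rfl⟩ := hp
      refine ⟨A, mem_S.2 ?_, rfl⟩
      omega
  · rw [Nat.cast_eq_zero, Finset.card_eq_zero, Finset.filter_eq_empty_iff]
    rintro ⟨A, B⟩ hp hAB
    have hp := mem_P.1 hp
    simp only at hp hAB
    subst hAB
    omega

/-- classes with root colour `col` -/
noncomputable def SC (col : Bool) (n l c : ℕ) : Finset Q := by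
  classical
  exact (S (n + 1) l (c + if col then 1 else 0)).filter (fun q => ∃ A B, q = qnode col A B)

open Classical in
theorem two_card_SC (col : Bool) (n l c : ℕ) :
    2 * ((SC col n l c).card : ℚ) =
      2 * (((P n l c).filter (fun p => p.1 = p.2)).card : ℚ) +
      (if 1 ≤ l then ((P n (l - 1) c).card : ℚ) -
        (((P n (l - 1) c).filter (fun p => p.1 = p.2)).card : ℚ) else 0) := by
  set D := (P n l c).filter (fun p => p.1 = p.2) with hD
  set E := if 1 ≤ l then (P n (l - 1) c).filter (fun p => ¬ p.1 = p.2) else ∅ with hE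
  have hEm : ∀ p, p ∈ E ↔ (qn p.1 + qn p.2 = n ∧ ql p.1 + ql p.2 + 1 = l ∧
      qb p.1 + qb p.2 = c) ∧ ¬ p.1 = p.2 := by
    intro p
    rw [hE]
    split_ifs with h
    · simp only [Finset.mem_filter, mem_P]
      refine and_congr_left fun _ => ?_
      omega
    · simp only [Finset.notMem_empty, false_iff]
      rintro ⟨h1, -⟩
      omega
  have hDm : ∀ p, p ∈ D ↔ (qn p.1 + qn p.2 = n ∧ ql p.1 + ql p.2 = l ∧
      qb p.1 + qb p.2 = c) ∧ p.1 = p.2 := by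
    intro p; simp only [hD, Finset.mem_filter, mem_P]
  have hEc : (E.card : ℚ) = (if 1 ≤ l then ((P n (l - 1) c).card : ℚ) -
        (((P n (l - 1) c).filter (fun p => p.1 = p.2)).card : ℚ) else 0) := by
    rw [hE]
    split_ifs with h
    · rw [eq_sub_iff_add_eq, ← Nat.cast_add, add_comm,
        Finset.card_filter_add_card_filter_not]
    · simp
  rw [← hEc]
  have hDE : Disjoint D E := by
    rw [Finset.disjoint_left]
    intro p h1 h2
    exact ((hEm p).1 h2).2 ((hDm p).1 h1).2
  have key := Finset.sum_fiberwise_of_maps_to (s := D ∪ E) (t := SC col n l c)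
    (g := fun p => qnode col p.1 p.2) (by
      intro p hp
      simp only [SC, Finset.mem_filter, mem_S, qn_node, qb_node, ql_node]
      refine ⟨?_, p.1, p.2, rfl⟩
      rcases Finset.mem_union.1 hp with hp | hp
      · obtain ⟨h1, h2⟩ := (hDm p).1 hp
        rw [if_pos h2]; omega
      · obtain ⟨h1, h2⟩ := (hEm p).1 hp
        rw [if_neg h2]; omega)
    (f := fun p => if p.1 = p.2 then (2 : ℚ) else 1)
  rw [Finset.sum_union hDE] at key
  have k1 : ∑ p ∈ D, (if p.1 = p.2 then (2 : ℚ) else 1) = 2 * (D.card : ℚ) := by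
    rw [Finset.sum_congr rfl (fun p hp => if_pos ((hDm p).1 hp).2)]
    simp [mul_comm]
  have k2 : ∑ p ∈ E, (if p.1 = p.2 then (2 : ℚ) else 1) = (E.card : ℚ) := by
    rw [Finset.sum_congr rfl (fun p hp => if_neg ((hEm p).1 hp).2)]
    simp
  rw [k1, k2] at key
  rw [← key]
  have : ∀ q ∈ SC col n l c, ∑ p ∈ D ∪ E with qnode col p.1 p.2 = q,
      (if p.1 = p.2 then (2 : ℚ) else 1) = 2 := by
    intro q hq
    simp only [SC, Finset.mem_filter, mem_S] at hq
    obtain ⟨hq, A, B, rfl⟩ := hq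
    rw [qn_node, qb_node, ql_node] at hq
    by_cases hAB : A = B
    · subst hAB
      rw [if_pos rfl] at hq
      have : (D ∪ E).filter (fun p => qnode col p.1 p.2 = qnode col A A) = {(A, A)} := by
        ext ⟨X, Y⟩
        simp only [Finset.mem_filter, Finset.mem_union, hDm, hEm, qnode_eq, true_and,
          Finset.mem_singleton, Prod.mk.injEq, or_self]
        constructor
        · exact fun h => h.2
        · rintro ⟨rfl, rfl⟩
          refine ⟨Or.inl ⟨?_, rfl⟩, rfl, rfl⟩
          omega
      rw [this]; simp
    · rw [if_neg hAB] at hq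
      have : (D ∪ E).filter (fun p => qnode col p.1 p.2 = qnode col A B) =
          {(A, B), (B, A)} := by
        ext ⟨X, Y⟩
        simp only [Finset.mem_filter, Finset.mem_union, hDm, hEm, qnode_eq, true_and,
          Finset.mem_singleton, Finset.mem_insert, Prod.mk.injEq]
        constructor
        · exact fun h => h.2
        · rintro (⟨rfl, rfl⟩ | ⟨rfl, rfl⟩)
          · refine ⟨Or.inr ⟨?_, hAB⟩, Or.inl ⟨rfl, rfl⟩⟩
            omega
          · refine ⟨Or.inr ⟨?_, fun h => hAB h.symm⟩, Or.inr ⟨rfl, rfl⟩⟩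
            omega
      rw [this, Finset.sum_pair (by simp [hAB]), if_neg hAB, if_neg (fun h => hAB h.symm)]
      norm_num
  rw [Finset.sum_congr rfl this]
  simp [mul_comm]

theorem N_split (n l c : ℕ) : N (n + 1) l c =
    ((SC false n l c).card : ℚ) + (if 1 ≤ c then ((SC true n l (c - 1)).card : ℚ) else 0) := by
  classical
  have hne : ∀ q ∈ S (n + 1) l c, ∃ col A B, q = qnode col A B := by
    intro q hq
    rcases q_cases q with rfl | h
    · have := (mem_S.1 hq).1
      simp [qn, qnil, T2.nodes] at this
    · exact h
  have h0 : SC false n l c = (S (n + 1) l c).filter (fun q => ∃ A B, q = qnode false A B) := by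
    simp [SC]
  have h1 : (if 1 ≤ c then ((SC true n l (c - 1)).card : ℚ) else 0) =
      (((S (n + 1) l c).filter (fun q => ¬ ∃ A B, q = qnode false A B)).card : ℚ) := by
    have : ∀ q ∈ S (n + 1) l c, (¬ ∃ A B, q = qnode false A B) ↔ ∃ A B, q = qnode true A B := by
      intro q hq
      obtain ⟨col, A, B, rfl⟩ := hne q hq
      cases col
      · refine iff_of_false (fun h => h ⟨A, B, rfl⟩) ?_
        rintro ⟨X, Y, h⟩
        exact absurd ((qnode_eq _ _ _ _ _ _).1 h).1 (by decide)
      · refine iff_of_true ?_ ⟨A, B, rfl⟩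
        rintro ⟨X, Y, h⟩
        exact absurd ((qnode_eq _ _ _ _ _ _).1 h).1 (by decide)
    rw [Finset.filter_congr this]
    split_ifs with hc
    · simp [SC, Nat.sub_add_cancel hc]
    · symm
      rw [Nat.cast_eq_zero, Finset.card_eq_zero, Finset.filter_eq_empty_iff]
      rintro q hq ⟨A, B, rfl⟩
      have := (mem_S.1 hq).2.2
      rw [qb_node] at this
      simp at this
      omega
  rw [h0, h1, N, ← Nat.cast_add, Finset.card_filter_add_card_filter_not]

theorem N_rec (n l c : ℕ) : N (n + 1) l c =
    (if (n + 1) % 2 = 1 then ((-1 : ℚ) / 2) ^ (l % 2) * N ((n + 1) / 2) (l / 2) (c / 2)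
        else 0)
      + (1 / 2) * ∑ δ ∈ Finset.range 2, if δ ≤ c then
          (∑ k ∈ (Finset.range (n + 1)), ∑ v ∈ Finset.range l,
            ∑ m ∈ Finset.range (c - δ + 1),
              N k v m * N (n - k) (l - 1 - v) (c - δ - m)) else 0 := by
  have h0 := two_card_SC false n l c
  have h1 := two_card_SC true n l (c - 1)
  rw [N_split]
  simp only [card_diag, card_P] at h0 h1
  rw [Finset.sum_range_succ, Finset.sum_range_one]
  simp only [Nat.zero_le, if_true, Nat.sub_zero]
  have hn : n % 2 = 0 ∨ n % 2 = 1 := by omega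
  have hp : (n + 1) % 2 = 1 - n % 2 := by omega
  rcases l with _ | l
  · have hl : ¬ (1 ≤ 0) := by omega
    simp only [Nat.zero_mod, Nat.zero_div, true_and, hl, if_false, hp,
      Finset.range_zero, Finset.sum_empty, Finset.sum_const_zero, pow_zero, ite_self] at h0 h1 ⊢
    rcases c with _ | c
    · rcases hn with hn | hn
      · have e1 : (n + 1) / 2 = n / 2 := by omega
        simp [hn, e1] at h0 ⊢
        linarith
      · simp [hn] at h0 ⊢
        rw [h0]
    · have hc : c % 2 = 0 ∨ c % 2 = 1 := by omega
      have hcp : (c + 1) % 2 = 1 - c % 2 := by omega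
      rcases hn with hn | hn
      · have e1 : (n + 1) / 2 = n / 2 := by omega
        rcases hc with hc | hc
        · have e2 : (c + 1) / 2 = c / 2 := by omega
          simp [hn, e1, hc, hcp, e2] at h0 h1 ⊢
          rw [h0, h1]; simp
        · simp [hn, e1, hc, hcp] at h0 h1 ⊢
          rw [h0, h1]; simp
      · simp [hn] at h0 h1 ⊢
        rw [h0, h1]; simp
  · have hl : l % 2 = 0 ∨ l % 2 = 1 := by omega
    have hlp : (l + 1) % 2 = 1 - l % 2 := by omega
    simp only [Nat.add_sub_cancel, Nat.le_add_left, if_true, hp, hlp] at h0 h1 ⊢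
    have e3 : l % 2 = 0 → (l + 1) / 2 = l / 2 := by omega
    generalize (∑ k ∈ Finset.range (n + 1), ∑ v ∈ Finset.range (l + 1),
      ∑ m ∈ Finset.range (c + 1), N k v m * N (n - k) (l - v) (c - m)) = U at h0 ⊢
    generalize (∑ k ∈ Finset.range (n + 1), ∑ v ∈ Finset.range (l + 1),
      ∑ m ∈ Finset.range (c - 1 + 1), N k v m * N (n - k) (l - v) (c - 1 - m)) = V at h1 ⊢
    generalize ((SC false n (l + 1) c).card : ℚ) = X at h0 ⊢
    generalize ((SC true n (l + 1) (c - 1)).card : ℚ) = Y at h1 ⊢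
    rcases c with _ | c
    · rcases hn with hn | hn
      · have e1 : (n + 1) / 2 = n / 2 := by omega
        rcases hl with hl | hl
        · have e3 := e3 hl
          simp [hn, e1, hl, e3] at h0 ⊢
          linarith
        · simp [hn, e1, hl] at h0 ⊢
          linarith
      · simp [hn] at h0 ⊢
        linarith
    · have hc : c % 2 = 0 ∨ c % 2 = 1 := by omega
      have hcp : (c + 1) % 2 = 1 - c % 2 := by omega
      rcases hn with hn | hn
      · have e1 : (n + 1) / 2 = n / 2 := by omega
        rcases hc with hc | hc
        · have e2 : (c + 1) / 2 = c / 2 := by omega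
          rcases hl with hl | hl
          · have e3 := e3 hl
            simp [hn, e1, hc, hcp, e2, hl, e3] at h0 h1 ⊢
            linarith
          · simp [hn, e1, hc, hcp, e2, hl] at h0 h1 ⊢
            linarith
        · rcases hl with hl | hl
          · have e3 := e3 hl
            simp [hn, e1, hc, hcp, hl, e3] at h0 h1 ⊢
            linarith
          · simp [hn, e1, hc, hcp, hl] at h0 h1 ⊢
            linarith
      · simp [hn] at h0 h1 ⊢
        linarith

theorem N_zero (l c : ℕ) : N 0 l c = if l = 0 ∧ c = 0 then 1 else 0 := by
  have hS : ∀ q, q ∈ S 0 l c ↔ q = qnil ∧ l = 0 ∧ c = 0 := by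
    intro q
    rw [mem_S]
    rcases q_cases q with rfl | ⟨col, A, B, rfl⟩
    · simp [qn, ql, qb, qnil, T2.nodes, T2.blacks, ell2, eq_comm]
    · rw [qn_node]
      constructor
      · intro h; omega
      · rintro ⟨h, -⟩
        have := congrArg qn h
        rw [qn_node] at this
        simp [qn, qnil, T2.nodes] at this
  rw [N]
  split_ifs with h
  · have : S 0 l c = {qnil} := by ext q; rw [hS]; simp [h]
    simp [this]
  · rw [Nat.cast_eq_zero, Finset.card_eq_zero, Finset.eq_empty_iff_forall_notMem]
    intro q hq
    exact h ((hS q).1 hq).2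

theorem ell_lt (t : T2) : ell2 t ≤ t.nodes - 1 := by
  classical
  induction t with
  | nil => simp [ell2]
  | node col a b iha ihb =>
    have hpos : ∀ t : T2, t = .nil ∨ 1 ≤ t.nodes := by
      intro t
      cases t with
      | nil => left; rfl
      | node => right; simp [T2.nodes]
    have hl : ell2 (.node col a b) ≤ ell2 a + ell2 b + 1 := by
      simp only [ell2]; split_ifs <;> omega
    rcases hpos a with rfl | ha
    · rcases hpos b with rfl | hb
      · simp [ell2, Flip2.nil]
      · simp only [T2.nodes]
        have : ell2 .nil = 0 := rfl
        omega
    · simp only [T2.nodes]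
      omega

theorem blacks_le (t : T2) : t.blacks ≤ t.nodes := by
  induction t with
  | nil => simp [T2.blacks]
  | node col a b iha ihb => simp only [T2.blacks, T2.nodes]; split_ifs <;> omega

theorem N_out (n l c : ℕ) (h : n + 1 ≤ l ∨ n + 1 < c) : N (n + 1) l c = 0 := by
  rw [N, Nat.cast_eq_zero, Finset.card_eq_zero, Finset.eq_empty_iff_forall_notMem]
  intro q hq
  rw [mem_S] at hq
  induction q using Quotient.inductionOn with | h t =>
  obtain ⟨h1, h2, h3⟩ := hq
  change t.nodes = _ at h1
  change ell2 t = _ at h2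
  change t.blacks = _ at h3
  have := ell_lt t
  have := blacks_le t
  omega

theorem N_l0 (n : ℕ) : ∀ c, c ≤ n + 1 → N (n + 1) 0 c =
    @ite ℚ (∃ r : ℕ, 1 ≤ r ∧ n + 1 = 2 ^ r - 1) (Classical.propDecidable _) 1 0 := by
  induction n using Nat.strong_induction_on with
  | _ n ih =>
  intro c hc
  rw [N_rec]
  simp only [Finset.range_zero, Finset.sum_empty, Finset.sum_const_zero, ite_self, mul_zero,
    add_zero, Nat.zero_mod, pow_zero, one_mul, Nat.zero_div]
  rcases Nat.eq_zero_or_pos n with rfl | hn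
  · have : c / 2 = 0 := by omega
    rw [if_pos (by norm_num), if_pos ⟨1, by norm_num⟩]
    simp [N_zero, this]
  · split_ifs with h1 h2 h2
    · obtain ⟨m, hm⟩ : ∃ m, (n + 1) / 2 = m + 1 := ⟨(n + 1) / 2 - 1, by omega⟩
      rw [hm, ih m (by omega) _ (by omega), if_pos]
      obtain ⟨r, hr, h⟩ := h2
      obtain ⟨s, rfl⟩ : ∃ s, r = s + 1 := ⟨r - 1, by omega⟩
      refine ⟨s, ?_, ?_⟩
      · rcases Nat.eq_zero_or_pos s with rfl | hs
        · simp at h; omega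
        · exact hs
      · rw [pow_succ] at h; omega
    · obtain ⟨m, hm⟩ : ∃ m, (n + 1) / 2 = m + 1 := ⟨(n + 1) / 2 - 1, by omega⟩
      rw [hm, ih m (by omega) _ (by omega), if_neg]
      rintro ⟨r, hr, h⟩
      refine h2 ⟨r + 1, by omega, ?_⟩
      rw [pow_succ]
      omega
    · exfalso
      obtain ⟨r, hr, h⟩ := h2
      obtain ⟨s, rfl⟩ : ∃ s, r = s + 1 := ⟨r - 1, by omega⟩
      rw [pow_succ] at h
      have := Nat.one_le_two_pow (n := s)
      omega
    · rfl

/-- the triple convolution in the extremal case collapses -/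
theorem conv_max (n c : ℕ) :
    ∑ k ∈ Finset.range (n + 1 + 1), ∑ v ∈ Finset.range (n + 1),
      ∑ m ∈ Finset.range (c + 1), N k v m * N (n + 1 - k) (n - v) (c - m) =
    2 * N (n + 1) n c := by
  rw [Finset.sum_range_succ, Finset.sum_range_succ']
  have hz : ∑ k ∈ Finset.range n, ∑ v ∈ Finset.range (n + 1),
      ∑ m ∈ Finset.range (c + 1), N (k + 1) v m * N (n + 1 - (k + 1)) (n - v) (c - m) = 0 := by
    refine Finset.sum_eq_zero fun k hk => Finset.sum_eq_zero fun v hv =>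
      Finset.sum_eq_zero fun m hm => ?_
    simp only [Finset.mem_range] at hk hv
    by_cases h : k + 1 ≤ v
    · rw [N_out _ _ _ (Or.inl h), zero_mul]
    · obtain ⟨j, hj⟩ : ∃ j, n + 1 - (k + 1) = j + 1 := ⟨n - k - 1, by omega⟩
      rw [hj, N_out j _ _ (Or.inl (by omega)), mul_zero]
  rw [hz, zero_add, Finset.sum_eq_single 0, Finset.sum_eq_single 0, Finset.sum_eq_single n,
    Finset.sum_eq_single c]
  · simp [N_zero]; ring
  · intro m hm hmc
    simp only [Finset.mem_range] at hm
    simp only [Nat.sub_self, N_zero]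
    rw [if_neg (by omega), mul_zero]
  · simp
  · intro v hv hvn
    simp only [Finset.mem_range] at hv
    refine Finset.sum_eq_zero fun m hm => ?_
    simp only [Nat.sub_self, N_zero]
    rw [if_neg (by omega), mul_zero]
  · simp
  · intro m hm hmc
    simp only [N_zero]
    rw [if_neg (by omega), zero_mul]
  · simp
  · intro v hv hvn
    refine Finset.sum_eq_zero fun m hm => ?_
    simp only [N_zero]
    rw [if_neg (by omega), zero_mul]
  · simp

theorem N_max (n : ℕ) : ∀ c, N (n + 1) n c = ((n + 1).choose c : ℚ) := by
  induction n with
  | zero =>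
    intro c
    by_cases hc : c ≤ 1
    · rw [N_l0 0 c hc, if_pos ⟨1, by norm_num⟩]
      interval_cases c <;> simp
    · rw [N_out _ _ _ (Or.inr (by omega)), Nat.choose_eq_zero_of_lt (by omega)]; simp
  | succ n ih =>
    intro c
    rw [N_rec]
    have hz : (if (n + 1 + 1) % 2 = 1 then ((-1 : ℚ) / 2) ^ ((n + 1) % 2) *
        N ((n + 1 + 1) / 2) ((n + 1) / 2) (c / 2) else 0) = 0 := by
      split_ifs with h
      · obtain ⟨m, hm⟩ : ∃ m, (n + 1 + 1) / 2 = m + 1 := ⟨n / 2, by omega⟩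
        rw [hm, N_out m _ _ (Or.inl (by omega)), mul_zero]
      · rfl
    rw [hz, Finset.sum_range_succ, Finset.sum_range_one]
    simp only [Nat.zero_le, if_true, Nat.sub_zero, Nat.add_sub_cancel]
    rw [conv_max, conv_max, ih]
    cases c with
    | zero => simp
    | succ c =>
      rw [if_pos (by omega), Nat.add_sub_cancel, ih, Nat.choose_succ_succ (n + 1) c]
      push_cast
      ring

theorem N_eq_K3 (n : ℕ) : ∀ l c, N n l c = K3 n l c := by
  induction n using Nat.strong_induction_on with
  | _ n ih =>
  intro l c
  cases n with
  | zero => rw [N_zero, K3]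
  | succ n =>
    rw [K3]
    split_ifs with h1 h2 h3 h4 h5
    · exact N_out n l c h1
    · subst h2; exact N_max _ c
    · subst h3; rw [N_l0 n c (by omega), if_pos h4]
    · subst h3; rw [N_l0 n c (by omega), if_neg h4]
    all_goals
      rw [N_rec]
      simp only [h5, if_true, if_false]
      refine congrArg₂ _ ?_ ?_
      · first
          | rw [ih _ (by omega)]
          | rfl
      · congr 1
        refine Finset.sum_congr rfl fun δ _ => ?_
        congr 1
        rw [← Finset.sum_attach]
        refine Finset.sum_congr rfl fun k _ => Finset.sum_congr rfl fun v _ =>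
          Finset.sum_congr rfl fun m _ => ?_
        have := Finset.mem_range.mp k.2
        rw [ih _ (by omega), ih _ (by omega)]

end K3Proof

/-- `K3 n ℓ c` equals the number of color-preserving flip-equivalence classes of 2-colored
planar binary trees with exactly `n` nodes, exactly `c` black nodes, and class cardinality
`2^ℓ` (equivalently, whose members have exactly `ℓ` internal positions with non-equivalent
children subtrees); in particular `K3 n ℓ c` is a natural number. -/
theorem K3_counts_classes (n ℓ c : ℕ) :
    {C : Set T2 | ∃ t : T2, t.nodes = n ∧ t.blacks = c ∧ ell2 t = ℓ ∧
      C = {s : T2 | Flip2 s t}}.Finite ∧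
    ({C : Set T2 | ∃ t : T2, t.nodes = n ∧ t.blacks = c ∧ ell2 t = ℓ ∧
      C = {s : T2 | Flip2 s t}}.ncard : ℚ) = K3 n ℓ c := by
  have e : ∀ x y : T2, (Quotient.mk K3Proof.flipSetoid x = Quotient.mk K3Proof.flipSetoid y) ↔
    Flip2 x y := fun x y => Quotient.eq
  let f : K3Proof.Q → Set T2 := fun q => {s | Quotient.mk K3Proof.flipSetoid s = q}
  have hf : Function.Injective f := by
    intro p q h
    induction p using Quotient.inductionOn with | h t =>
    have : t ∈ f (Quotient.mk K3Proof.flipSetoid t) := rfl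
    rw [h] at this
    exact this
  have hs : {C : Set T2 | ∃ t : T2, t.nodes = n ∧ t.blacks = c ∧ ell2 t = ℓ ∧
      C = {s : T2 | Flip2 s t}} = f '' (K3Proof.S n ℓ c : Set K3Proof.Q) := by
    ext C
    constructor
    · rintro ⟨t, h1, h2, h3, rfl⟩
      refine ⟨Quotient.mk K3Proof.flipSetoid t, ?_, ?_⟩
      · exact K3Proof.mem_S.2 ⟨h1, h3, h2⟩
      · ext s; exact e s t
    · rintro ⟨q, hq, rfl⟩
      induction q using Quotient.inductionOn with | h t =>
      obtain ⟨h1, h3, h2⟩ := K3Proof.mem_S.1 hq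
      refine ⟨t, h1, h2, h3, ?_⟩
      ext s; exact e s t
  rw [hs]
  refine ⟨(Finset.finite_toSet _).image f, ?_⟩
  rw [Set.ncard_image_of_injective _ hf, Set.ncard_coe_finset, ← K3Proof.N_eq_K3]
  rfl
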